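/- In any implicit knowledge-based HMS model, for every individual i ∈ I, if α_i satisfies properties (II), (III), and (IV), then the derived explicit possibility correspondence Π*_i satisfies Projections Preserve Ignorance: if ω ∈ S_Φ and Ψ ⊆ Φ, then (Π*_i(ω))^↑ ⊆ (Π*_i(ω_Ψ))^↑. -/

import Mathlib

/-- The frame underlying HMS (Heifetz–Meier–Schipper) unawareness models: a complete
lattice of nonempty pairwise disjoint state spaces `S Φ` indexed by the subsets
`Φ ⊆ At` of atomic formulas (ordered by inclusion of the index), together with
commuting surjective projections `r Φ Ψ : S Φ → S Ψ` for `Ψ ⊆ Φ`. -/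
structure HMSFrame (At : Type*) (Ω : Type*) where
  S : Set At → Set Ω
  S_nonempty : ∀ Φ : Set At, (S Φ).Nonempty
  S_disjoint : ∀ ⦃Φ Φ' : Set At⦄, Φ ≠ Φ' → Disjoint (S Φ) (S Φ')
  S_cover : ∀ ω : Ω, ∃ Φ : Set At, ω ∈ S Φ
  r : Set At → Set At → Ω → Ω
  r_mem : ∀ ⦃Φ Ψ : Set At⦄, Ψ ⊆ Φ → ∀ ⦃ω : Ω⦄, ω ∈ S Φ → r Φ Ψ ω ∈ S Ψ
  r_surjOn : ∀ ⦃Φ Ψ : Set At⦄, Ψ ⊆ Φ → Set.SurjOn (r Φ Ψ) (S Φ) (S Ψ)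
  r_id : ∀ (Φ : Set At), ∀ ω ∈ S Φ, r Φ Φ ω = ω
  r_comp : ∀ ⦃Φ Ψ Υ : Set At⦄, Υ ⊆ Ψ → Ψ ⊆ Φ → ∀ ω ∈ S Φ, r Ψ Υ (r Φ Ψ ω) = r Φ Υ ω

variable {At Ω : Type*}

/-- `D^↑`, for a subset `D` of the space `S Φ`: all extensions of states in `D` to
(weakly) more expressive spaces. -/
def HMSFrame.up (F : HMSFrame At Ω) (Φ : Set At) (D : Set Ω) : Set Ω :=
  {ω : Ω | ∃ Ψ : Set At, Φ ⊆ Ψ ∧ ω ∈ F.S Ψ ∧ F.r Ψ Φ ω ∈ D}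

/-- `E` is an event with base-space `S Φ` (and base some `D ⊆ S Φ`). -/
def HMSFrame.IsEvent (F : HMSFrame At Ω) (Φ : Set At) (E : Set Ω) : Prop :=
  ∃ D, D ⊆ F.S Φ ∧ E = F.up Φ D

/-- Negation `¬E := (S Φ \ D)^↑` of an event `E` with base-space `S Φ`
(note `S Φ \ E = S Φ \ D` for an event `E` with base `D ⊆ S Φ`). -/
def HMSFrame.neg (F : HMSFrame At Ω) (Φ : Set At) (E : Set Ω) : Set Ω :=
  F.up Φ (F.S Φ \ E)

/-- Properties of the (explicit) possibility correspondence of HMS models: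
nonemptiness, Confinement, Generalized Reflexivity, Stationarity,
Projections Preserve Ignorance, and Projections Preserve Knowledge. -/
structure IsPossibility (F : HMSFrame At Ω) (Pi : Ω → Set Ω) : Prop where
  nonempty : ∀ ω : Ω, (Pi ω).Nonempty
  confinement : ∀ ⦃Φ : Set At⦄ ⦃ω : Ω⦄, ω ∈ F.S Φ → ∃ Ψ, Ψ ⊆ Φ ∧ Pi ω ⊆ F.S Ψ
  genRefl : ∀ ⦃Υ : Set At⦄ ⦃ω : Ω⦄, Pi ω ⊆ F.S Υ → ω ∈ F.up Υ (Pi ω)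
  stationarity : ∀ ⦃ω ω' : Ω⦄, ω' ∈ Pi ω → Pi ω' = Pi ω
  projIgnorance : ∀ ⦃Φ Ψ : Set At⦄ ⦃ω : Ω⦄, ω ∈ F.S Φ → Ψ ⊆ Φ →
    ∀ ⦃Υ Υ' : Set At⦄, Pi ω ⊆ F.S Υ → Pi (F.r Φ Ψ ω) ⊆ F.S Υ' →
      F.up Υ (Pi ω) ⊆ F.up Υ' (Pi (F.r Φ Ψ ω))
  projKnowledge : ∀ ⦃Φ Ψ Υ : Set At⦄ ⦃ω : Ω⦄, Υ ⊆ Ψ → Ψ ⊆ Φ → ω ∈ F.S Φ →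
    Pi ω ⊆ F.S Ψ → F.r Ψ Υ '' Pi ω = Pi (F.r Φ Υ ω)

/-- Properties of an implicit possibility correspondence `La` relative to the
explicit possibility correspondence `Pi`: Reflexivity, Stationarity, Projections
Preserve Implicit Knowledge (whose statement `(Λ(ω))_Ψ = Λ(ω_Ψ)` presupposes that
the projection of `Λ(ω)` is defined, i.e. `Λ(ω) ⊆ S Φ` for `ω ∈ S Φ`),
Explicit Measurability, and Implicit Measurability. -/
structure IsImplicit (F : HMSFrame At Ω) (Pi La : Ω → Set Ω) : Prop where
  refl : ∀ ω : Ω, ω ∈ La ω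
  stationarity : ∀ ⦃ω ω' : Ω⦄, ω' ∈ La ω → La ω' = La ω
  projImplicit : ∀ ⦃Φ : Set At⦄ ⦃ω : Ω⦄, ω ∈ F.S Φ →
    La ω ⊆ F.S Φ ∧ ∀ ⦃Ψ : Set At⦄, Ψ ⊆ Φ → F.r Φ Ψ '' La ω = La (F.r Φ Ψ ω)
  explicitMeas : ∀ ⦃ω ω' : Ω⦄, ω' ∈ La ω → Pi ω' = Pi ω
  implicitMeas : ∀ ⦃Φ Ψ : Set At⦄ ⦃ω ω' : Ω⦄, ω ∈ F.S Φ → Pi ω ⊆ F.S Ψ →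
    ω' ∈ Pi ω → La ω' = F.r Φ Ψ '' La ω

/-- Properties of the primitive implicit possibility correspondence `La` of an
implicit knowledge-based HMS model: nonemptiness, Reflexivity, Stationarity, and
Projections Preserve Implicit Knowledge. -/
structure IsImplicitStar (F : HMSFrame At Ω) (La : Ω → Set Ω) : Prop where
  nonempty : ∀ ω : Ω, (La ω).Nonempty
  refl : ∀ ω : Ω, ω ∈ La ω
  stationarity : ∀ ⦃ω ω' : Ω⦄, ω' ∈ La ω → La ω' = La ω
  projImplicit : ∀ ⦃Φ : Set At⦄ ⦃ω : Ω⦄, ω ∈ F.S Φ →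
    La ω ⊆ F.S Φ ∧ ∀ ⦃Ψ : Set At⦄, Ψ ⊆ Φ → F.r Φ Ψ '' La ω = La (F.r Φ Ψ ω)

/-- Property (O) (Lack of Conception): the awareness level at `ω ∈ S Φ` (encoded
by its index `al ω ⊆ At`, so that the awareness level is the space `S (al ω)`)
is weakly less expressive than `S Φ`. -/
def PropO (F : HMSFrame At Ω) (al : Ω → Set At) : Prop :=
  ∀ ⦃Φ : Set At⦄ ⦃ω : Ω⦄, ω ∈ F.S Φ → al ω ⊆ Φ

/-- Property (I) (Awareness Measurability). -/
def PropI (F : HMSFrame At Ω) (La : Ω → Set Ω) (al : Ω → Set At) : Prop :=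
  ∀ ⦃ω ω' : Ω⦄, ω' ∈ La ω → al ω' = al ω

/-- Property (II): if `ω ∈ S Φ` and `S Ψ ⪯ α(ω)` then `α(ω_Ψ) = S Ψ`. -/
def PropII (F : HMSFrame At Ω) (al : Ω → Set At) : Prop :=
  ∀ ⦃Φ Ψ : Set At⦄ ⦃ω : Ω⦄, ω ∈ F.S Φ → Ψ ⊆ al ω → Ψ ⊆ Φ → al (F.r Φ Ψ ω) = Ψ

/-- Property (III): if `ω ∈ S Φ` and `α(ω) ⪯ S Ψ ⪯ S Φ` then `α(ω_Ψ) = α(ω)`. -/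
def PropIII (F : HMSFrame At Ω) (al : Ω → Set At) : Prop :=
  ∀ ⦃Φ Ψ : Set At⦄ ⦃ω : Ω⦄, ω ∈ F.S Φ → al ω ⊆ Ψ → Ψ ⊆ Φ → al (F.r Φ Ψ ω) = al ω

/-- Property (IV): if `ω ∈ S Φ` and `Ψ ⊆ Φ` then `α(ω) ⪰ α(ω_Ψ)`. -/
def PropIV (F : HMSFrame At Ω) (al : Ω → Set At) : Prop :=
  ∀ ⦃Φ Ψ : Set At⦄ ⦃ω : Ω⦄, ω ∈ F.S Φ → Ψ ⊆ Φ → al (F.r Φ Ψ ω) ⊆ al ω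

/-- `PiS` is the explicit possibility correspondence derived from the implicit
possibility correspondence `La` and the awareness function `al`:
`Π*(ω_Ψ) := (Λ*(ω))_{α(ω_Ψ)}` for all `ω ∈ S Φ` and `Ψ ⊆ Φ`. -/
def DerivedPi (F : HMSFrame At Ω) (La : Ω → Set Ω) (al : Ω → Set At)
    (PiS : Ω → Set Ω) : Prop :=
  ∀ ⦃Φ Ψ : Set At⦄ ⦃ω : Ω⦄, ω ∈ F.S Φ → Ψ ⊆ Φ →
    PiS (F.r Φ Ψ ω) = F.r Φ (al (F.r Φ Ψ ω)) '' La ω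

/-- The (explicit) knowledge operator `K(E) := {ω : Π(ω) ⊆ E}` (as a set this
agrees with the definition with default value `∅^{S(E)}` on the vacuous case). -/
def Kop (F : HMSFrame At Ω) (Pi : Ω → Set Ω) (E : Set Ω) : Set Ω :=
  {ω : Ω | Pi ω ⊆ E}

/-- The implicit knowledge operator `L(E) := {ω : Λ(ω) ⊆ E}`. -/
def Lop (F : HMSFrame At Ω) (La : Ω → Set Ω) (E : Set Ω) : Set Ω :=
  {ω : Ω | La ω ⊆ E}

/-- The awareness operator `A(E) := {ω : S_{Π(ω)} ⪰ S(E)}`, applied to an event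
with base-space `S Φ`. -/
def Aop (F : HMSFrame At Ω) (Pi : Ω → Set Ω) (Φ : Set At) : Set Ω :=
  {ω : Ω | ∃ Ψ : Set At, Φ ⊆ Ψ ∧ Pi ω ⊆ F.S Ψ}

/-- The unawareness operator `U(E) := ¬A(E)`, applied to an event with
base-space `S Φ` (recall `A(E)` is an `S(E)`-based event). -/
def Uop (F : HMSFrame At Ω) (Pi : Ω → Set Ω) (Φ : Set At) : Set Ω :=
  F.neg Φ (Aop F Pi Φ)

/-- The awareness operator `A*(E) := {ω : α(ω) ⪰ S(E)}` defined from the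
awareness function, applied to an event with base-space `S Φ`. -/
def AopStar (al : Ω → Set At) (Φ : Set At) : Set Ω :=
  {ω : Ω | Φ ⊆ al ω}

/-- An HMS model: the frame together with a possibility correspondence for each
individual and a valuation mapping each atomic formula to an event. -/
structure HMSModel (At Ω I : Type*) extends HMSFrame At Ω where
  Pi : I → Ω → Set Ω
  Pi_poss : ∀ i : I, IsPossibility toHMSFrame (Pi i)
  val : At → Set Ω
  val_event : ∀ p : At, ∃ Φ : Set At, toHMSFrame.IsEvent Φ (val p)

/-- A complemented HMS model: an HMS model together with an implicit possibility
correspondence for each individual. -/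
structure CompHMSModel (At Ω I : Type*) extends HMSModel At Ω I where
  La : I → Ω → Set Ω
  La_impl : ∀ i : I, IsImplicit toHMSModel.toHMSFrame (Pi i) (La i)

/-- An implicit knowledge-based HMS model: the frame together with, for each
individual, a primitive implicit possibility correspondence and an awareness
function satisfying (O)-(IV), and a valuation mapping atoms to events. -/
structure ImpHMSModel (At Ω I : Type*) extends HMSFrame At Ω where
  LaS : I → Ω → Set Ω
  LaS_impl : ∀ i : I, IsImplicitStar toHMSFrame (LaS i)
  al : I → Ω → Set At
  al_O : ∀ i : I, PropO toHMSFrame (al i)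
  al_I : ∀ i : I, PropI toHMSFrame (LaS i) (al i)
  al_II : ∀ i : I, PropII toHMSFrame (al i)
  al_III : ∀ i : I, PropIII toHMSFrame (al i)
  al_IV : ∀ i : I, PropIV toHMSFrame (al i)
  val : At → Set Ω
  val_event : ∀ p : At, ∃ Φ : Set At, toHMSFrame.IsEvent Φ (val p)

/-!
A state `ω` and its projection `ω_Ψ` are both projections of a single state `ξ` of the richest space
`S Set.univ`, so `Π*(ω)` and `Π*(ω_Ψ)` are the images of the same set `Λ*(ξ)` in `S (α ω)` and
`S (α ω_Ψ)`. By (IV) the second of these spaces lies weakly below the first, hence `Π*(ω_Ψ)` is the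
projection of `Π*(ω)`, and a state extending an element of `Π*(ω)` also extends the projection of
that element.
-/

namespace HMSFrame

variable (F : HMSFrame At Ω) {Φ Ψ Υ : Set At} {D : Set Ω} {ω : Ω}

theorem eq_of_mem_S (hΦ : ω ∈ F.S Φ) (hΨ : ω ∈ F.S Ψ) : Φ = Ψ :=
  by_contra fun hne => Set.disjoint_left.mp (F.S_disjoint hne) hΦ hΨ

theorem image_r_subset_S (hΨΦ : Ψ ⊆ Φ) (hD : D ⊆ F.S Φ) : F.r Φ Ψ '' D ⊆ F.S Ψ :=
  Set.image_subset_iff.mpr fun _ hω => F.r_mem hΨΦ (hD hω)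

theorem image_r_image_r (hΥΨ : Υ ⊆ Ψ) (hΨΦ : Ψ ⊆ Φ) (hD : D ⊆ F.S Φ) :
    F.r Ψ Υ '' (F.r Φ Ψ '' D) = F.r Φ Υ '' D := by
  rw [Set.image_image]
  exact Set.image_congr fun ω hω => F.r_comp hΥΨ hΨΦ ω (hD hω)

theorem up_subset_up_image_r (hΨΦ : Ψ ⊆ Φ) (D : Set Ω) :
    F.up Φ D ⊆ F.up Ψ (F.r Φ Ψ '' D) := by
  rintro ω ⟨Θ, hΦΘ, hω, hωD⟩
  exact ⟨Θ, hΨΦ.trans hΦΘ, hω, F.r Θ Φ ω, hωD, F.r_comp hΨΦ hΦΘ ω hω⟩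

theorem up_eq_up_of_subset_S (hΦ : D ⊆ F.S Φ) (hΨ : D ⊆ F.S Ψ) : F.up Φ D = F.up Ψ D := by
  obtain rfl | ⟨ω, hω⟩ := D.eq_empty_or_nonempty
  · simp [up]
  · rw [F.eq_of_mem_S (hΦ hω) (hΨ hω)]

end HMSFrame

namespace DerivedPi

variable {F : HMSFrame At Ω} {La PiS : Ω → Set Ω} {al : Ω → Set At} {Φ Ψ : Set At} {ω : Ω}

theorem subset_S (hPiS : DerivedPi F La al PiS)
    (hLa : ∀ ξ ∈ F.S Set.univ, La ξ ⊆ F.S Set.univ) (ω : Ω) : PiS ω ⊆ F.S (al ω) := by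
  obtain ⟨Φ, hω⟩ := F.S_cover ω
  obtain ⟨ξ, hξ, rfl⟩ := F.r_surjOn (Set.subset_univ Φ) hω
  rw [hPiS hξ (Set.subset_univ Φ)]
  exact F.image_r_subset_S (Set.subset_univ _) (hLa ξ hξ)

theorem image_r_eq (hPiS : DerivedPi F La al PiS)
    (hLa : ∀ ξ ∈ F.S Set.univ, La ξ ⊆ F.S Set.univ) (hω : ω ∈ F.S Φ) (hΨΦ : Ψ ⊆ Φ)
    (hal : al (F.r Φ Ψ ω) ⊆ al ω) :
    F.r (al ω) (al (F.r Φ Ψ ω)) '' PiS ω = PiS (F.r Φ Ψ ω) := by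
  obtain ⟨ξ, hξ, rfl⟩ := F.r_surjOn (Set.subset_univ Φ) hω
  rw [F.r_comp hΨΦ (Set.subset_univ Φ) ξ hξ] at hal ⊢
  rw [hPiS hξ (Set.subset_univ Φ), hPiS hξ (Set.subset_univ Ψ),
    F.image_r_image_r hal (Set.subset_univ _) (hLa ξ hξ)]

end DerivedPi

theorem derived_pi_projections_preserve_ignorance_general
    (F : HMSFrame At Ω) (La : Ω → Set Ω) (al : Ω → Set At) (PiS : Ω → Set Ω)
    (hLa : ∀ ξ ∈ F.S Set.univ, La ξ ⊆ F.S Set.univ)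
    (hPiS : DerivedPi F La al PiS) (hIV : PropIV F al) :
    ∀ ⦃Φ Ψ : Set At⦄ ⦃ω : Ω⦄, ω ∈ F.S Φ → Ψ ⊆ Φ →
      ∀ ⦃Υ Υ' : Set At⦄, PiS ω ⊆ F.S Υ → PiS (F.r Φ Ψ ω) ⊆ F.S Υ' →
        F.up Υ (PiS ω) ⊆ F.up Υ' (PiS (F.r Φ Ψ ω)) := by
  intro Φ Ψ ω hω hΨΦ Υ Υ' hΥ hΥ'
  have hal : al (F.r Φ Ψ ω) ⊆ al ω := hIV hω hΨΦ
  calc F.up Υ (PiS ω)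
      = F.up (al ω) (PiS ω) := F.up_eq_up_of_subset_S hΥ (hPiS.subset_S hLa ω)
    _ ⊆ F.up (al (F.r Φ Ψ ω)) (F.r (al ω) (al (F.r Φ Ψ ω)) '' PiS ω) :=
      F.up_subset_up_image_r hal (PiS ω)
    _ = F.up (al (F.r Φ Ψ ω)) (PiS (F.r Φ Ψ ω)) := by rw [hPiS.image_r_eq hLa hω hΨΦ hal]
    _ = F.up Υ' (PiS (F.r Φ Ψ ω)) := F.up_eq_up_of_subset_S (hPiS.subset_S hLa _) hΥ'

/-- In any implicit knowledge-based HMS model, for every individual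
`i ∈ I`, if `α_i` satisfies properties (II), (III), and (IV), then the derived
explicit possibility correspondence `Π*_i` satisfies Projections Preserve
Ignorance: if `ω ∈ S_Φ` and `Ψ ⊆ Φ`, then `(Π*_i(ω))^↑ ⊆ (Π*_i(ω_Ψ))^↑`. -/
theorem derived_pi_projections_preserve_ignorance
    {At Ω I : Type*} [Nonempty At] [Nonempty I]
    (F : HMSFrame At Ω) (La : I → Ω → Set Ω) (al : I → Ω → Set At)
    (PiS : I → Ω → Set Ω) (i : I)
    (hLa : IsImplicitStar F (La i))
    (hPiS : DerivedPi F (La i) (al i) (PiS i))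
    (hII : PropII F (al i)) (hIII : PropIII F (al i)) (hIV : PropIV F (al i)) :
    ∀ ⦃Φ Ψ : Set At⦄ ⦃ω : Ω⦄, ω ∈ F.S Φ → Ψ ⊆ Φ →
      ∀ ⦃Υ Υ' : Set At⦄, PiS i ω ⊆ F.S Υ → PiS i (F.r Φ Ψ ω) ⊆ F.S Υ' →
        F.up Υ (PiS i ω) ⊆ F.up Υ' (PiS i (F.r Φ Ψ ω)) :=
  derived_pi_projections_preserve_ignorance_general F (La i) (al i) (PiS i)
    (fun _ hξ => (hLa.projImplicit hξ).1) hPiS hIV
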